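/- arXiv:2206.09567 — 3 statements merged into one kernel-verified Lean document; each statement's English description precedes it below -/
import Mathlib

section
/- (Theorem 4: local 2-FWL has stronger link discriminating power than local 2-WL.) (i) For every label set Σ, all labeled graphs G = (V,E,l) and G' = (V',E',l') over Σ, and all target links (p,q) in G and (p',q') in G': if (p,q) and (p',q') are 2-FWL_L-indistinguishable, then they are 2-WL_L-indistinguishable. (ii) There exist unlabeled graphs G, G' and target links (p,q) in G and (p',q') in G' that are 2-WL_L-indistinguishable but not 2-FWL_L-indistinguishable. -/
open scoped Classical

universe u v

/-- The common 1-WL color type over label set `σ`: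
`C 0 = σ`, `C (t+1) = C t × Multiset (C t)`. -/
def WL1Color (σ : Type u) : ℕ → Type u
  | 0 => σ
  | t + 1 => WL1Color σ t × Multiset (WL1Color σ t)

/-- The 1-WL coloring of a labeled graph `(G, l)`:
`c¹⁰(v) = l v`, `c¹ᵗ⁺¹(v) = (c¹ᵗ(v), {{c¹ᵗ(u) : u ∈ N(v)}})`. -/
noncomputable def wl1 {σ : Type u} {V : Type v} [Fintype V] (G : SimpleGraph V)
    (l : V → σ) : (t : ℕ) → V → WL1Color σ t
  | 0 => l
  | t + 1 => fun v => (wl1 G l t v, (G.neighborFinset v).val.map (wl1 G l t))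

/-- The type of initial pair colors over label set `σ`. -/
def PairColor0 (σ : Type u) : Type u := σ × σ × Bool × Bool

/-- Initial pair color `c⁰(p,q) = (l p, l q, 1_{(p,q)∈E}, 1_{p=q})`. -/
noncomputable def pairInit {σ : Type u} {V : Type v} (G : SimpleGraph V) (l : V → σ)
    (e : V × V) : PairColor0 σ :=
  (l e.1, l e.2, decide (G.Adj e.1 e.2), decide (e.1 = e.2))

/-- The common (plain/local) 2-WL pair color type over label set `σ`. -/
def WL2Color (σ : Type u) : ℕ → Type u
  | 0 => PairColor0 σ
  | t + 1 => WL2Color σ t × Multiset (WL2Color σ t) × Multiset (WL2Color σ t)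

/-- The plain 2-WL coloring:
`c₂ᵗ⁺¹(p,q) = (c₂ᵗ(p,q), {{c₂ᵗ(u,q) : u ∈ V}}, {{c₂ᵗ(p,v) : v ∈ V}})`. -/
noncomputable def wl2 {σ : Type u} {V : Type v} [Fintype V] (G : SimpleGraph V)
    (l : V → σ) : (t : ℕ) → V × V → WL2Color σ t
  | 0 => pairInit G l
  | t + 1 => fun e =>
      (wl2 G l t e,
        Finset.univ.val.map (fun u => wl2 G l t (u, e.2)),
        Finset.univ.val.map (fun v => wl2 G l t (e.1, v)))

/-- The local 2-WL (2-WL_L) coloring: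
`cₗᵗ⁺¹(p,q) = (cₗᵗ(p,q), {{cₗᵗ(u,q) : (u,q) ∈ E}}, {{cₗᵗ(p,v) : (p,v) ∈ E}})`. -/
noncomputable def wl2L {σ : Type u} {V : Type v} [Fintype V] (G : SimpleGraph V)
    (l : V → σ) : (t : ℕ) → V × V → WL2Color σ t
  | 0 => pairInit G l
  | t + 1 => fun e =>
      (wl2L G l t e,
        (Finset.univ.filter (fun u => G.Adj u e.2)).val.map (fun u => wl2L G l t (u, e.2)),
        (Finset.univ.filter (fun v => G.Adj e.1 v)).val.map (fun v => wl2L G l t (e.1, v)))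

/-- The common (plain/local) 2-FWL pair color type over label set `σ`. -/
def FWLColor (σ : Type u) : ℕ → Type u
  | 0 => PairColor0 σ
  | t + 1 => FWLColor σ t × Multiset (FWLColor σ t × FWLColor σ t)

/-- The 2-FWL coloring:
`c_Fᵗ⁺¹(p,q) = (c_Fᵗ(p,q), {{(c_Fᵗ(u,q), c_Fᵗ(p,u)) : u ∈ V}})`. -/
noncomputable def fwl2 {σ : Type u} {V : Type v} [Fintype V] (G : SimpleGraph V)
    (l : V → σ) : (t : ℕ) → V × V → FWLColor σ t
  | 0 => pairInit G l
  | t + 1 => fun e =>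
      (fwl2 G l t e,
        Finset.univ.val.map (fun u => (fwl2 G l t (u, e.2), fwl2 G l t (e.1, u))))

/-- The local 2-FWL (2-FWL_L) coloring:
`c_FLᵗ⁺¹(p,q) = (c_FLᵗ(p,q), {{(c_FLᵗ(u,q), c_FLᵗ(p,u)) : (u,q) ∈ E or (p,u) ∈ E}})`. -/
noncomputable def fwl2L {σ : Type u} {V : Type v} [Fintype V] (G : SimpleGraph V)
    (l : V → σ) : (t : ℕ) → V × V → FWLColor σ t
  | 0 => pairInit G l
  | t + 1 => fun e =>
      (fwl2L G l t e,
        (Finset.univ.filter (fun u => G.Adj u e.2 ∨ G.Adj e.1 u)).val.map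
          (fun u => (fwl2L G l t (u, e.2), fwl2L G l t (e.1, u))))

/-- A target link: an ordered pair of distinct, non-adjacent vertices. -/
def IsTargetLink {V : Type v} (G : SimpleGraph V) (e : V × V) : Prop :=
  e.1 ≠ e.2 ∧ ¬ G.Adj e.1 e.2

/-- `(p,q)` in `(G,l)` and `(p',q')` in `(G',l')` are 1-WL-indistinguishable. -/
noncomputable def WL1Indist {σ : Type u} {V V' : Type v} [Fintype V] [Fintype V']
    (G : SimpleGraph V) (l : V → σ) (G' : SimpleGraph V') (l' : V' → σ)
    (e : V × V) (e' : V' × V') : Prop :=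
  ∀ t : ℕ, wl1 G l t e.1 = wl1 G' l' t e'.1 ∧ wl1 G l t e.2 = wl1 G' l' t e'.2

/-- 2-WL-indistinguishability. -/
noncomputable def WL2Indist {σ : Type u} {V V' : Type v} [Fintype V] [Fintype V']
    (G : SimpleGraph V) (l : V → σ) (G' : SimpleGraph V') (l' : V' → σ)
    (e : V × V) (e' : V' × V') : Prop :=
  ∀ t : ℕ, wl2 G l t e = wl2 G' l' t e'

/-- Local 2-WL (2-WL_L) indistinguishability. -/
noncomputable def WL2LIndist {σ : Type u} {V V' : Type v} [Fintype V] [Fintype V']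
    (G : SimpleGraph V) (l : V → σ) (G' : SimpleGraph V') (l' : V' → σ)
    (e : V × V) (e' : V' × V') : Prop :=
  ∀ t : ℕ, wl2L G l t e = wl2L G' l' t e'

/-- 2-FWL-indistinguishability. -/
noncomputable def FWL2Indist {σ : Type u} {V V' : Type v} [Fintype V] [Fintype V']
    (G : SimpleGraph V) (l : V → σ) (G' : SimpleGraph V') (l' : V' → σ)
    (e : V × V) (e' : V' × V') : Prop :=
  ∀ t : ℕ, fwl2 G l t e = fwl2 G' l' t e'

/-- Local 2-FWL (2-FWL_L) indistinguishability. -/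
noncomputable def FWL2LIndist {σ : Type u} {V V' : Type v} [Fintype V] [Fintype V']
    (G : SimpleGraph V) (l : V → σ) (G' : SimpleGraph V') (l' : V' → σ)
    (e : V × V) (e' : V' × V') : Prop :=
  ∀ t : ℕ, fwl2L G l t e = fwl2L G' l' t e'

/-- The 0/1 labeling trick: augment the labeling with indicator of membership in `{p, q}`. -/
noncomputable def label01 {σ : Type u} {V : Type v} (l : V → σ) (e : V × V) :
    V → σ × Bool :=
  fun v => (l v, decide (v = e.1 ∨ v = e.2))

/-- 1-WL-with-0/1-labeling indistinguishability of target links. -/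
noncomputable def WL1LabelIndist {σ : Type u} {V V' : Type v} [Fintype V] [Fintype V']
    (G : SimpleGraph V) (l : V → σ) (G' : SimpleGraph V') (l' : V' → σ)
    (e : V × V) (e' : V' × V') : Prop :=
  WL1Indist G (label01 l e) G' (label01 l' e') e e'

/-- The number of common neighbors of `p` and `q` in `G`. -/
noncomputable def commonNbrCount {V : Type v} [Fintype V] (G : SimpleGraph V)
    (e : V × V) : ℕ :=
  (G.neighborFinset e.1 ∩ G.neighborFinset e.2).card

/-- The edge-existence indicator recorded by a local 2-FWL color. -/
def FWLColor.adjBit {σ : Type u} : (t : ℕ) → FWLColor σ t → Bool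
  | 0, c => c.2.2.1
  | t + 1, c => FWLColor.adjBit t c.1

theorem FWLColor.adjBit_fwl2L {σ : Type u} {V : Type v} [Fintype V] (G : SimpleGraph V)
    (l : V → σ) (t : ℕ) (e : V × V) :
    FWLColor.adjBit t (fwl2L G l t e) = decide (G.Adj e.1 e.2) := by
  induction t with
  | zero => rfl
  | succ t ih => exact ih

/-- The local 2-WL color determined by a local 2-FWL color. -/
noncomputable def FWLColor.toWL2 {σ : Type u} : (t : ℕ) → FWLColor σ t → WL2Color σ t
  | 0, c => c
  | t + 1, c =>
      (FWLColor.toWL2 t c.1,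
        (c.2.filter fun x => FWLColor.adjBit t x.1 = true).map fun x => FWLColor.toWL2 t x.1,
        (c.2.filter fun x => FWLColor.adjBit t x.2 = true).map fun x => FWLColor.toWL2 t x.2)

theorem FWLColor.toWL2_fwl2L {σ : Type u} {V : Type v} [Fintype V] (G : SimpleGraph V)
    (l : V → σ) (t : ℕ) (e : V × V) :
    FWLColor.toWL2 t (fwl2L G l t e) = wl2L G l t e := by
  induction t generalizing e with
  | zero => rfl
  | succ t ih =>
    simp only [fwl2L, FWLColor.toWL2, wl2L, ih, Multiset.filter_map, Multiset.map_map,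
      Function.comp_def, FWLColor.adjBit_fwl2L, decide_eq_true_eq, Finset.filter_val,
      Multiset.filter_filter]
    refine Prod.ext rfl (Prod.ext ?_ ?_) <;>
      exact congrArg (Multiset.map _) (Multiset.filter_congr fun u _ => by tauto)

/-- In unlabeled regular graphs of equal degree, local 2-WL never refines the initial color. -/
theorem wl2L_eq_of_isRegularOfDegree {V V' : Type*} [Fintype V] [Fintype V']
    {G : SimpleGraph V} {G' : SimpleGraph V'} [G.LocallyFinite] [G'.LocallyFinite]
    {d : ℕ}
    (hG : G.IsRegularOfDegree d) (hG' : G'.IsRegularOfDegree d) (t : ℕ) (e : V × V) (e' : V' × V')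
    (h : pairInit G (fun _ => ()) e = pairInit G' (fun _ => ()) e') :
    wl2L G (fun _ => ()) t e = wl2L G' (fun _ => ()) t e' := by
  induction t generalizing e e' with
  | zero => exact h
  | succ t ih =>
    have init_eq {a b : V} {a' b' : V'} (hab : G.Adj a b) (hab' : G'.Adj a' b') :
        pairInit G (fun _ => ()) (a, b) = pairInit G' (fun _ => ()) (a', b') := by
      simp [pairInit, hab, hab', hab.ne, hab'.ne]
      rfl
    have map_eq {s : Finset V} {s' : Finset V'} {f : V → WL2Color Unit t}
        {f' : V' → WL2Color Unit t} (hs : s.card = s'.card)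
        (hf : ∀ u ∈ s, ∀ u' ∈ s', f u = f' u') : s.val.map f = s'.val.map f' := by
      obtain ⟨i⟩ : Nonempty (s ≃ s') := ⟨Finset.equivOfCardEq hs⟩
      exact Multiset.map_eq_map_of_bij_of_nodup _ _ s.nodup s'.nodup
        (fun a ha => (i ⟨a, ha⟩ : V')) (fun a ha => (i ⟨a, ha⟩).2)
        (fun a ha b hb hab => by simpa using i.injective (Subtype.ext hab))
        (fun b hb => ⟨i.symm ⟨b, hb⟩, (i.symm ⟨b, hb⟩).2, by simp⟩)
        (fun a ha => hf a ha _ (i ⟨a, ha⟩).2)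
    have card_eq (a : V) (a' : V') : (Finset.univ.filter fun u => G.Adj a u).card =
        (Finset.univ.filter fun u => G'.Adj a' u).card := by
      rw [← SimpleGraph.neighborFinset_eq_filter, ← SimpleGraph.neighborFinset_eq_filter,
        SimpleGraph.card_neighborFinset_eq_degree, SimpleGraph.card_neighborFinset_eq_degree]
      convert (hG a).trans (hG' a').symm
    refine Prod.ext (ih e e' h) (Prod.ext (map_eq ?_ ?_) (map_eq (card_eq _ _) ?_))
    · simpa only [SimpleGraph.adj_comm] using card_eq e.2 e'.2
    · exact fun u hu u' hu' => ih _ _ (init_eq (by simpa using hu) (by simpa using hu'))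
    · exact fun u hu u' hu' => ih _ _ (init_eq (by simpa using hu) (by simpa using hu'))

/-- Theorem 4: local 2-FWL has stronger link discriminating power than local 2-WL. -/
theorem local_fwl2_stronger_than_local_wl2 :
    (∀ (σ : Type u) (V V' : Type v) [Fintype V] [Fintype V']
        (G : SimpleGraph V) (l : V → σ) (G' : SimpleGraph V') (l' : V' → σ)
        (e : V × V) (e' : V' × V'),
        IsTargetLink G e → IsTargetLink G' e' →
        FWL2LIndist G l G' l' e e' → WL2LIndist G l G' l' e e') ∧
    (∃ (n n' : ℕ) (G : SimpleGraph (Fin n)) (G' : SimpleGraph (Fin n'))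
        (e : Fin n × Fin n) (e' : Fin n' × Fin n'),
        IsTargetLink G e ∧ IsTargetLink G' e' ∧
        WL2LIndist G (fun _ => ()) G' (fun _ => ()) e e' ∧
        ¬ FWL2LIndist G (fun _ => ()) G' (fun _ => ()) e e') := by
  refine ⟨fun σ V V' _ _ G l G' l' e e' _ _ h t => ?_, 6, 6, SimpleGraph.cycleGraph 6,
    SimpleGraph.cycleGraph 6, (0, 2), (0, 3), ?_, ?_, fun t => ?_, fun h => ?_⟩
  · rw [← FWLColor.toWL2_fwl2L, ← FWLColor.toWL2_fwl2L, h t]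
  · exact ⟨by decide, by decide⟩
  · exact ⟨by decide, by decide⟩
  · have adj₂ : ¬ (SimpleGraph.cycleGraph 6).Adj 0 2 := by decide
    have adj₃ : ¬ (SimpleGraph.cycleGraph 6).Adj 0 3 := by decide
    have init_eq : pairInit (SimpleGraph.cycleGraph 6) (fun _ => ()) (0, 2) =
        pairInit (SimpleGraph.cycleGraph 6) (fun _ => ()) (0, 3) := by
      simp [pairInit, adj₂, adj₃]
      rfl
    have regular : (SimpleGraph.cycleGraph 6).IsRegularOfDegree 2 :=
      fun _ => SimpleGraph.cycleGraph_degree_three_le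
    exact wl2L_eq_of_isRegularOfDegree (d := 2) regular regular t _ _ init_eq
  · have card_eq := congrArg (fun c => Multiset.card c.2) (h 1)
    simp only [fwl2L, Multiset.card_map, Finset.card_val] at card_eq
    revert card_eq
    convert (by decide : ¬ (Finset.univ.filter fun u : Fin 6 =>
      (SimpleGraph.cycleGraph 6).Adj u 2 ∨ (SimpleGraph.cycleGraph 6).Adj 0 u).card =
      (Finset.univ.filter fun u : Fin 6 =>
      (SimpleGraph.cycleGraph 6).Adj u 3 ∨ (SimpleGraph.cycleGraph 6).Adj 0 u).card)
end

section
/- (Simulation direction of Theorem 1.) For every label set Σ, all labeled graphs G = (V,E,l) and G' = (V',E',l') over Σ, and all target links (p,q) in G and (p',q') in G': if (p,q) and (p',q') are 2-WL-indistinguishable, then they are 1-WL-indistinguishable. Equivalently, any two links distinguished by 1-WL are also distinguished by 2-WL. -/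
open scoped Classical

universe u v

/-- The adjacency indicator recorded in a 2-WL color. -/
def WL2Color.adj {σ : Type u} : (t : ℕ) → WL2Color σ t → Bool
  | 0 => fun c => c.2.2.1
  | t + 1 => fun c => WL2Color.adj t c.1

/-- The 1-WL colors of the two endpoints, decoded from a 2-WL color of a pair. -/
def WL2Color.toWL1 {σ : Type u} : (t : ℕ) → WL2Color σ t → WL1Color σ t × WL1Color σ t
  | 0 => fun c => (c.1, c.2.1)
  | t + 1 => fun c =>
      (((WL2Color.toWL1 t c.1).1,
          (c.2.2.filter (fun d => WL2Color.adj t d)).map (fun d => (WL2Color.toWL1 t d).2)),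
        ((WL2Color.toWL1 t c.1).2,
          (c.2.1.filter (fun d => WL2Color.adj t d)).map (fun d => (WL2Color.toWL1 t d).1)))

theorem WL2Color.adj_wl2 {σ : Type u} {V : Type v} [Fintype V] (G : SimpleGraph V)
    (l : V → σ) (t : ℕ) (e : V × V) :
    WL2Color.adj t (wl2 G l t e) = decide (G.Adj e.1 e.2) := by
  induction t with
  | zero => rfl
  | succ t ih => exact ih

theorem WL2Color.toWL1_wl2 {σ : Type u} {V : Type v} [Fintype V] (G : SimpleGraph V)
    (l : V → σ) (t : ℕ) (e : V × V) :
    WL2Color.toWL1 t (wl2 G l t e) = (wl1 G l t e.1, wl1 G l t e.2) := by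
  induction t generalizing e with
  | zero => rfl
  | succ t ih =>
    simp only [WL2Color.toWL1, wl2, wl1, ih, Multiset.filter_map, Multiset.map_map,
      Function.comp_def, WL2Color.adj_wl2, decide_eq_true_eq,
      SimpleGraph.neighborFinset_eq_filter, Finset.filter_val, G.adj_comm _ e.2]

/-- Simulation direction of Theorem 1: 2-WL-indistinguishable target links are
1-WL-indistinguishable. -/
theorem wl2_indist_imp_wl1_indist :
    ∀ (σ : Type u) (V V' : Type v) [Fintype V] [Fintype V']
      (G : SimpleGraph V) (l : V → σ) (G' : SimpleGraph V') (l' : V' → σ)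
      (e : V × V) (e' : V' × V'),
      IsTargetLink G e → IsTargetLink G' e' →
      WL2Indist G l G' l' e e' → WL1Indist G l G' l' e e' := by
  intro σ V V' _ _ G l G' l' e e' _ _ h t
  have key := WL2Color.toWL1_wl2 G l t e
  rw [h t, WL2Color.toWL1_wl2, Prod.mk.injEq] at key
  exact ⟨key.1.symm, key.2.symm⟩
end

section
/- (Table 1 entry: 2-WL has stronger link discriminating power than local 2-WL.) (i) For every label set Σ, all labeled graphs G = (V,E,l) and G' = (V',E',l') over Σ, and all target links (p,q) in G and (p',q') in G': if (p,q) and (p',q') are 2-WL-indistinguishable, then they are 2-WL_L-indistinguishable. (ii) There exist unlabeled graphs G, G' and target links (p,q) in G and (p',q') in G' that are 2-WL_L-indistinguishable but not 2-WL-indistinguishable. -/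
open scoped Classical

universe u v

/-- The edge-existence indicator recorded in a pair color. -/
def WL2Color.IsEdge {σ : Type u} : (t : ℕ) → WL2Color σ t → Prop
  | 0, c => c.2.2.1 = true
  | t + 1, c => WL2Color.IsEdge t c.1

/-- The local 2-WL color computed from the plain 2-WL color. -/
noncomputable def WL2Color.toLocal {σ : Type u} : (t : ℕ) → WL2Color σ t → WL2Color σ t
  | 0, c => c
  | t + 1, c =>
      (WL2Color.toLocal t c.1,
        (c.2.1.filter (WL2Color.IsEdge t)).map (WL2Color.toLocal t),
        (c.2.2.filter (WL2Color.IsEdge t)).map (WL2Color.toLocal t))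

lemma isEdge_wl2_iff {σ : Type u} {V : Type v} [Fintype V] (G : SimpleGraph V) (l : V → σ)
    (t : ℕ) (e : V × V) : WL2Color.IsEdge t (wl2 G l t e) ↔ G.Adj e.1 e.2 := by
  induction t with
  | zero => simp [WL2Color.IsEdge, wl2, pairInit]
  | succ t ih => exact ih

lemma toLocal_wl2 {σ : Type u} {V : Type v} [Fintype V] (G : SimpleGraph V) (l : V → σ)
    (t : ℕ) (e : V × V) : WL2Color.toLocal t (wl2 G l t e) = wl2L G l t e := by
  induction t generalizing e with
  | zero => rfl
  | succ t ih =>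
    simp only [WL2Color.toLocal, wl2, wl2L, Multiset.filter_map, Multiset.map_map,
      Function.comp_def, isEdge_wl2_iff, ih, Finset.filter_val]
    congr!

lemma wl2L_bot_eq {σ : Type u} {V V' : Type v} [Fintype V] [Fintype V'] {l : V → σ}
    {l' : V' → σ} {e : V × V} {e' : V' × V'}
    (h : pairInit (⊥ : SimpleGraph V) l e = pairInit (⊥ : SimpleGraph V') l' e') (t : ℕ) :
    wl2L ⊥ l t e = wl2L ⊥ l' t e' := by
  induction t with
  | zero => exact h
  | succ t ih =>
    simp [wl2L, ih]
    rfl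

lemma WL2Indist.card_eq {σ : Type u} {V V' : Type v} [Fintype V] [Fintype V']
    {G : SimpleGraph V} {l : V → σ} {G' : SimpleGraph V'} {l' : V' → σ}
    {e : V × V} {e' : V' × V'} (h : WL2Indist G l G' l' e e') :
    Fintype.card V = Fintype.card V' := by
  have h1 := congrArg (fun c : WL2Color σ 1 => Multiset.card c.2.1) (h 1)
  exact (Multiset.card_map _ _).symm.trans (h1.trans (Multiset.card_map _ _))

/-- Table 1 entry: 2-WL has stronger link discriminating power than local 2-WL. -/
theorem wl2_stronger_than_local_wl2 :
    (∀ (σ : Type u) (V V' : Type v) [Fintype V] [Fintype V']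
        (G : SimpleGraph V) (l : V → σ) (G' : SimpleGraph V') (l' : V' → σ)
        (e : V × V) (e' : V' × V'),
        IsTargetLink G e → IsTargetLink G' e' →
        WL2Indist G l G' l' e e' → WL2LIndist G l G' l' e e') ∧
    (∃ (n n' : ℕ) (G : SimpleGraph (Fin n)) (G' : SimpleGraph (Fin n'))
        (e : Fin n × Fin n) (e' : Fin n' × Fin n'),
        IsTargetLink G e ∧ IsTargetLink G' e' ∧
        WL2LIndist G (fun _ => ()) G' (fun _ => ()) e e' ∧
        ¬ WL2Indist G (fun _ => ()) G' (fun _ => ()) e e') := by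
  refine ⟨?_, 2, 3, ⊥, ⊥, (0, 1), (0, 1), by simp [IsTargetLink], by simp [IsTargetLink],
    wl2L_bot_eq (by simp [pairInit]; rfl), fun h => by simpa using h.card_eq⟩
  intro σ V V' _ _ G l G' l' e e' _ _ h t
  rw [← toLocal_wl2, ← toLocal_wl2, h t]
end
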